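/- (Stepanov) Let Ω ⊂ ℝⁿ be open and f : Ω → ℝ^m a measurable function. Then f is differentiable at Lebesgue-almost every point of the set L_f = { x ∈ Ω : limsup_{y→x} ‖f(y) − f(x)‖/‖y − x‖ < +∞ }. -/

import Mathlib

open MeasureTheory Set

/-!
Exhaust the points where the pointwise Lipschitz constant of `f` is finite by countably many sets
`A` of points sharing a constant `K` and a radius `r`. On such a set `f` is locally Lipschitz, so
Rademacher's theorem provides, at almost every `x ∈ A`, a derivative `L` within `A`. Almost every
`x ∈ A` is moreover a density point of `A`, so each `y` has some `z ∈ A` with `z - y = o(y - x)`.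
Since the uniform estimate at `z` compares `f z` with `f y` even for `y ∉ A`, the expansion
`f z = f x + L (z - x) + o(z - x)` transfers from `z` to `y`.
-/

section Stepanov

open Filter Metric Asymptotics
open scoped Topology NNReal

section Density

variable {X : Type*} [PseudoMetricSpace X]

theorem ae_isLittleO_infDist [MeasurableSpace X] [BorelSpace X] [SecondCountableTopology X]
    (μ : Measure X) [IsUnifLocDoublingMeasure μ] [IsLocallyFiniteMeasure μ] (A : Set X) :
    ∀ᵐ x ∂μ, x ∈ A → (fun y ↦ infDist y A) =o[𝓝 x] (fun y ↦ dist y x) := by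
  filter_upwards [ae_all_iff.2 fun n : ℕ ↦ ae_imp_of_ae_restrict
    (IsUnifLocDoublingMeasure.ae_tendsto_measure_inter_div μ A ((n : ℝ) + 1))] with x hx hxA
  refine isLittleO_iff_nat_mul_le.2 fun n ↦ ?_
  have hn : (0 : ℝ) < n + 1 := by positivity
  -- Density is tested on the balls centred at `y` of radius `dist y x / (n + 1)`, whose dilates
  -- by `n + 1` contain `x`.
  have radius_tendsto : Tendsto (fun y ↦ dist y x / (n + 1)) (𝓝 x ⊓ 𝓟 {y | 0 < dist y x})
      (𝓝[>] 0) := by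
    refine tendsto_nhdsWithin_iff.2 ⟨?_, ?_⟩
    · have : Continuous fun y ↦ dist y x / ((n : ℝ) + 1) := by fun_prop
      exact (this.tendsto' x 0 (by simp)).mono_left inf_le_left
    · exact mem_inf_of_right fun y hy ↦ div_pos hy hn
  have ratio_tendsto := hx n hxA (fun y ↦ y) _ radius_tendsto <| Eventually.of_forall fun y ↦ by
    rw [mem_closedBall', mul_div_cancel₀ _ hn.ne']
  have ratio_pos := eventually_inf_principal.1 (ratio_tendsto.eventually_const_lt one_pos)
  filter_upwards [ratio_pos] with y hy
  rw [Real.norm_of_nonneg infDist_nonneg, Real.norm_of_nonneg dist_nonneg]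
  rcases dist_nonneg.eq_or_lt' (a := dist y x) with hyx | hyx
  · have : infDist y A ≤ dist y x := infDist_le_dist_of_mem hxA
    nlinarith [infDist_nonneg (x := y) (s := A)]
  · have meets : μ (A ∩ closedBall y (dist y x / (n + 1))) ≠ 0 :=
      (ENNReal.div_pos_iff.1 (hy hyx)).1
    obtain ⟨z, hzA, hz⟩ := nonempty_of_measure_ne_zero meets
    have : infDist y A ≤ dist y x / (n + 1) :=
      (infDist_le_dist_of_mem hzA).trans (mem_closedBall'.1 hz)
    rw [le_div_iff₀ hn] at this
    linarith [infDist_nonneg (x := y) (s := A)]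

theorem exists_map_isLittleO_dist_of_infDist {A : Set X} {x : X} {l : Filter X} (hl : l ≤ 𝓝 x)
    (hx : x ∈ A) (hA : (fun y ↦ infDist y A) =o[l] (fun y ↦ dist y x)) :
    ∃ π : X → X, (∀ y, π y ∈ A) ∧ (fun y ↦ dist y (π y)) =o[l] (fun y ↦ dist y x) := by
  -- The infimum need not be attained, hence the slack `dist y x ^ 2`.
  have near : ∀ y, ∃ z ∈ A, dist y z ≤ infDist y A + dist y x ^ 2 := fun y ↦ by
    rcases dist_nonneg.eq_or_lt' (a := dist y x) with hyx | hyx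
    · exact ⟨x, hx, by rw [hyx]; positivity [infDist_nonneg (x := y) (s := A)]⟩
    · have : infDist y A < infDist y A + dist y x ^ 2 := lt_add_of_pos_right _ (by positivity)
      obtain ⟨z, hz, hyz⟩ := (infDist_lt_iff ⟨x, hx⟩).1 this
      exact ⟨z, hz, hyz.le⟩
  choose π hπA hπ using near
  have dist_tendsto : Tendsto (fun y ↦ dist y x) l (𝓝 0) :=
    (tendsto_iff_dist_tendsto_zero.1 tendsto_id).mono_left hl
  have sq : (fun y ↦ dist y x ^ 2) =o[l] (fun y ↦ dist y x) :=
    (isLittleO_pow_id one_lt_two).comp_tendsto dist_tendsto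
  refine ⟨π, hπA, IsBigO.trans_isLittleO (.of_bound' (.of_forall fun y ↦ ?_)) (hA.add sq)⟩
  rw [Real.norm_of_nonneg dist_nonneg]
  exact (hπ y).trans (le_abs_self _)

end Density

section HasFDerivWithinAt

variable {𝕜 E F : Type*} [NontriviallyNormedField 𝕜] [NormedAddCommGroup E] [NormedSpace 𝕜 E]
  [NormedAddCommGroup F] [NormedSpace 𝕜 F]

theorem hasFDerivWithinAt_of_isBigO_of_infDist {f : E → F} {L : E →L[𝕜] F} {A s : Set E} {x : E}
    (hx : x ∈ A) (hL : HasFDerivWithinAt f L A x)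
    (hf : (fun p : E × E ↦ f p.1 - f p.2) =O[𝓝[s ×ˢ A] (x, x)] (fun p ↦ p.1 - p.2))
    (hA : (fun y ↦ infDist y A) =o[𝓝[s] x] (fun y ↦ dist y x)) :
    HasFDerivWithinAt f L s x := by
  obtain ⟨π, hπA, hπ⟩ := exists_map_isLittleO_dist_of_infDist nhdsWithin_le_nhds hx hA
  simp only [dist_eq_norm] at hπ
  replace hπ : (fun y ↦ y - π y) =o[𝓝[s] x] (fun y ↦ y - x) := hπ.of_norm_norm
  have hπx : (fun y ↦ π y - x) =O[𝓝[s] x] (fun y ↦ y - x) := by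
    simpa using (isBigO_refl (fun y ↦ y - x) (𝓝[s] x)).sub hπ.isBigO
  have id_tendsto : Tendsto (fun y ↦ y) (𝓝[s] x) (𝓝[s] x) := tendsto_id
  have sub_tendsto : Tendsto (fun y ↦ y - x) (𝓝[s] x) (𝓝 0) :=
    tendsto_sub_nhds_zero_iff.2 (id_tendsto.mono_right nhdsWithin_le_nhds)
  have π_tendsto : Tendsto π (𝓝[s] x) (𝓝[A] x) := tendsto_nhdsWithin_iff.2
    ⟨tendsto_sub_nhds_zero_iff.1 (hπx.trans_tendsto sub_tendsto), .of_forall hπA⟩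
  have pair_tendsto : Tendsto (fun y ↦ (y, π y)) (𝓝[s] x) (𝓝[s ×ˢ A] (x, x)) := by
    rw [nhdsWithin_prod_eq]
    exact id_tendsto.prodMk π_tendsto
  have transverse : (fun y ↦ f y - f (π y)) =o[𝓝[s] x] (fun y ↦ y - x) :=
    (hf.comp_tendsto pair_tendsto).trans_isLittleO hπ
  have tangential : (fun y ↦ f (π y) - f x - L (π y - x)) =o[𝓝[s] x] (fun y ↦ y - x) :=
    (hL.isLittleO.comp_tendsto π_tendsto).trans_isBigO hπx
  have linear : (fun y ↦ L (y - π y)) =o[𝓝[s] x] (fun y ↦ y - x) :=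
    (L.isBigO_comp _ _).trans_isLittleO hπ
  refine .of_isLittleO (((transverse.add tangential).sub linear).congr_left fun y ↦ ?_)
  simp only [map_sub]
  abel

end HasFDerivWithinAt

section UniformLipschitzPoints

/-- The points of `s` at which `f`, restricted to `s`, satisfies a pointwise Lipschitz estimate
with constant `K` on the ball of radius `r`. In this estimate the other point ranges over `s`, not
only over this subset; this is what makes the sets useful for covering the points of finite
pointwise Lipschitz constant. -/
def uniformLipschitzPoints {X Y : Type*} [PseudoMetricSpace X] [PseudoMetricSpace Y]
    (f : X → Y) (s : Set X) (K : ℝ≥0) (r : ℝ) : Set X :=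
  {x ∈ s | ∀ y ∈ s, dist y x < r → dist (f y) (f x) ≤ K * dist y x}

theorem locallyLipschitzOn_uniformLipschitzPoints {X Y : Type*} [PseudoMetricSpace X]
    [PseudoMetricSpace Y] (f : X → Y) (s : Set X) (K : ℝ≥0) {r : ℝ} (hr : 0 < r) :
    LocallyLipschitzOn (uniformLipschitzPoints f s K r) f := by
  intro x _
  refine ⟨K, _, inter_mem_nhdsWithin _ (ball_mem_nhds x (half_pos hr)),
    .of_dist_le_mul fun y hy z hz ↦ hz.1.2 y hy.1.1 ?_⟩
  linarith [dist_triangle_right y z x, mem_ball.1 hy.2, mem_ball.1 hz.2]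

variable {E F : Type*} [SeminormedAddCommGroup E] [SeminormedAddCommGroup F]
  (f : E → F) (s : Set E)

theorem isBigO_sub_nhdsWithin_prod_uniformLipschitzPoints (K : ℝ≥0) {r : ℝ} (hr : 0 < r) (x : E) :
    (fun p : E × E ↦ f p.1 - f p.2) =O[𝓝[s ×ˢ uniformLipschitzPoints f s K r] (x, x)]
      (fun p ↦ p.1 - p.2) := by
  have close : ∀ᶠ p : E × E in 𝓝 (x, x), dist p.1 p.2 < r :=
    continuous_dist.continuousAt.eventually_lt_const (by simpa using hr)
  refine .of_bound K ?_
  filter_upwards [self_mem_nhdsWithin, nhdsWithin_le_nhds close] with p ⟨hs, hA⟩ hp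
  simpa only [dist_eq_norm] using hA.2 p.1 hs hp

variable {f s}

theorem exists_nat_mem_uniformLipschitzPoints {x : E} (hx : x ∈ s)
    (hf : (fun y ↦ f y - f x) =O[𝓝[s] x] (fun y ↦ y - x)) :
    ∃ k : ℕ, x ∈ uniformLipschitzPoints f s k (1 / (k + 1)) := by
  obtain ⟨C, hC⟩ := hf.bound
  obtain ⟨r, hr, hrC⟩ := mem_nhdsWithin_iff.1 hC
  obtain ⟨i, hi⟩ := exists_nat_ge C
  obtain ⟨j, hj⟩ := exists_nat_one_div_lt hr
  refine ⟨max i j, hx, fun y hy hyx ↦ ?_⟩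
  have hyr : dist y x < r := hyx.trans_le <|
    (one_div_le_one_div_of_le (by positivity) (by gcongr; exact le_max_right i j)).trans hj.le
  have hCi : C ≤ (max i j : ℕ) := hi.trans (by exact_mod_cast le_max_left i j)
  calc dist (f y) (f x) ≤ C * dist y x := by
        simpa only [dist_eq_norm, mem_ofPred_eq] using hrC ⟨hyr, hy⟩
    _ ≤ (max i j : ℕ) * dist y x := by gcongr

end UniformLipschitzPoints

variable {E F : Type*} [NormedAddCommGroup E] [NormedSpace ℝ E] [FiniteDimensional ℝ E]
  [MeasurableSpace E] [BorelSpace E] [NormedAddCommGroup F] [NormedSpace ℝ F]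
  [FiniteDimensional ℝ F] (μ : Measure E) [μ.IsAddHaarMeasure]

theorem ae_differentiableWithinAt_of_locallyLipschitzOn {f : E → F} {s : Set E}
    (hf : LocallyLipschitzOn s f) : ∀ᵐ x ∂μ, x ∈ s → DifferentiableWithinAt ℝ f s x := by
  refine measure_null_of_locally_null _ fun x hx ↦ ?_
  obtain ⟨K, t, ht, hft⟩ := hf (Classical.not_imp.1 hx).1
  obtain ⟨u, hu, hxu, hut⟩ := mem_nhdsWithin.1 ht
  refine ⟨_, inter_mem_nhdsWithin _ (hu.mem_nhds hxu), ?_⟩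
  refine measure_mono_null ?_ (ae_iff.1 (hft.ae_differentiableWithinAt_of_mem (μ := μ)))
  rintro y ⟨hy, hyu⟩ hyt
  obtain ⟨hys, hdiff⟩ := Classical.not_imp.1 hy
  exact hdiff <| (hyt (hut ⟨hyu, hys⟩)).mono_of_mem_nhdsWithin <|
    mem_nhdsWithin.2 ⟨u, hu, hyu, hut⟩

theorem ae_differentiableWithinAt_of_mem_uniformLipschitzPoints (f : E → F) (s : Set E) (K : ℝ≥0)
    {r : ℝ} (hr : 0 < r) :
    ∀ᵐ x ∂μ, x ∈ uniformLipschitzPoints f s K r → DifferentiableWithinAt ℝ f s x := by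
  filter_upwards [ae_isLittleO_infDist μ (uniformLipschitzPoints f s K r),
    ae_differentiableWithinAt_of_locallyLipschitzOn μ
      (locallyLipschitzOn_uniformLipschitzPoints f s K hr)] with x hdense hdiff hx
  exact (hasFDerivWithinAt_of_isBigO_of_infDist hx (hdiff hx).hasFDerivWithinAt
    (isBigO_sub_nhdsWithin_prod_uniformLipschitzPoints f s K hr x)
    ((hdense hx).mono nhdsWithin_le_nhds)).differentiableWithinAt

theorem stepanov_general (f : E → F) (s : Set E) :
    ∀ᵐ x ∂μ, x ∈ s → (fun y ↦ f y - f x) =O[𝓝[s] x] (fun y ↦ y - x) →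
      DifferentiableWithinAt ℝ f s x := by
  have hpieces := fun k : ℕ ↦ ae_differentiableWithinAt_of_mem_uniformLipschitzPoints μ f s k
    (Nat.one_div_pos_of_nat (α := ℝ) (n := k))
  filter_upwards [ae_all_iff.2 hpieces] with x hx hxs hf
  obtain ⟨k, hk⟩ := exists_nat_mem_uniformLipschitzPoints hxs hf
  exact hx k hk

end Stepanov

/-- Stepanov's theorem: a measurable function `f : Ω → ℝ^m` on an open set `Ω ⊆ ℝⁿ`
is differentiable at Lebesgue-almost every point of the set
`L_f = { x ∈ Ω : limsup_{y→x} ‖f(y) − f(x)‖/‖y − x‖ < ∞ }`. -/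
theorem stepanov {n m : ℕ} (Ω : Set (EuclideanSpace ℝ (Fin n))) (hΩ : IsOpen Ω)
    (f : EuclideanSpace ℝ (Fin n) → EuclideanSpace ℝ (Fin m)) (hf : Measurable f) :
    volume {x : EuclideanSpace ℝ (Fin n) | x ∈ Ω ∧
      (∃ C r : ℝ, 0 < r ∧ ∀ y, ‖y - x‖ < r → ‖f y - f x‖ ≤ C * ‖y - x‖) ∧
      ¬ DifferentiableAt ℝ f x} = 0 := by
  refine measure_mono_null ?_ (ae_iff.1 (stepanov_general volume f Ω))
  rintro x ⟨hx, ⟨C, r, hr, hC⟩, hdiff⟩ h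
  refine hdiff ((h hx ?_).differentiableAt (hΩ.mem_nhds hx))
  refine .of_bound C (nhdsWithin_le_nhds ?_)
  filter_upwards [Metric.ball_mem_nhds x hr] with y hy using hC y (by simpa [dist_eq_norm] using hy)
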